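/- arXiv:2108.09103 — 2 statements merged into one kernel-verified Lean document; each statement's English description precedes it below -/
import Mathlib

section
/- Consider M users and N clusters with a fixed assignment c(m) of user m to a cluster, cluster sets C_i = {m : c(m)=i}, weights α^c_m ∈ [0,1] with Σ_{m∈C_i} α^c_m = 1 for each i, α_{c_i} ∈ [0,1] with Σ_i α_{c_i} = 1, and α_m := α^c_m α_{c(m)}; differentiable losses F_m : ℝ^d → ℝ with L-Lipschitz gradients, f_{c_i} := Σ_{m∈C_i} α^c_m F_m, and suppose for every w ∈ ℝ^d and each i: Σ_{m∈C_i} α^c_m‖∇F_m(w) − ∇f_{c_i}(w)‖² ≤ ε_c². Then for any integer κ ≥ 1, any points w_m^τ ∈ ℝ^d (1 ≤ m ≤ M, 0 ≤ τ < κ) and any points z_i^τ ∈ ℝ^d (1 ≤ i ≤ N, 0 ≤ τ < κ): Σ_{m=1}^{M} α_m ‖ Σ_{τ=0}^{κ−1} ( ∇F_m(w_m^τ) − Σ_{j∈C(m)} α^c_j ∇F_j(w_j^τ) ) ‖² ≤ 6 L² κ Σ_{m=1}^{M} Σ_{τ=0}^{κ−1} α_m ‖ w_m^τ − z_{c(m)}^τ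 ‖² + 3 κ² ε_c², where C(m) denotes the cluster set C_{c(m)} containing m. -/
open Finset

/-!
Within one cluster and at one time, compare the gradients at the local points with those at the
common anchor: the deviation of a local gradient from the cluster mean is the sum of its own
perturbation, the deviation at the anchor, and the perturbation of the mean. Both perturbations
are controlled by Lipschitz continuity (the second after Jensen's inequality) and the middle term
by the divergence bound; `‖x + y + z‖² ≤ 3 (‖x‖² + ‖y‖² + ‖z‖²)` turns them into `6 = 3 + 3`
and `3`. Averaging over the clusters keeps the constants, and Cauchy–Schwarz in time costs a
factor `κ`, which together with the `κ` summands gives the `κ²` in front of `ε_c²`.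
-/

section NormSumSq

variable {ι E : Type*} [SeminormedAddCommGroup E]

lemma norm_sum_sq_le_card_mul_sum_norm_sq (s : Finset ι) (v : ι → E) :
    ‖∑ i ∈ s, v i‖ ^ 2 ≤ #s * ∑ i ∈ s, ‖v i‖ ^ 2 :=
  calc ‖∑ i ∈ s, v i‖ ^ 2 ≤ (∑ i ∈ s, ‖v i‖) ^ 2 := by gcongr; exact norm_sum_le s v
    _ ≤ #s * ∑ i ∈ s, ‖v i‖ ^ 2 := sq_sum_le_card_mul_sum_sq

lemma norm_add_add_sq_le (x y z : E) :
    ‖x + y + z‖ ^ 2 ≤ 3 * (‖x‖ ^ 2 + ‖y‖ ^ 2 + ‖z‖ ^ 2) := by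
  simpa [Fin.sum_univ_three] using norm_sum_sq_le_card_mul_sum_norm_sq univ ![x, y, z]

lemma sum_mul_norm_sum_sq_le {θ : Type*} (s : Finset ι) (T : Finset θ) {p : ι → ℝ}
    (hp : ∀ i ∈ s, 0 ≤ p i) (v : ι → θ → E) :
    ∑ i ∈ s, p i * ‖∑ τ ∈ T, v i τ‖ ^ 2 ≤ #T * ∑ τ ∈ T, ∑ i ∈ s, p i * ‖v i τ‖ ^ 2 :=
  calc ∑ i ∈ s, p i * ‖∑ τ ∈ T, v i τ‖ ^ 2
      ≤ ∑ i ∈ s, p i * (#T * ∑ τ ∈ T, ‖v i τ‖ ^ 2) := by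
        gcongr with i hi
        · exact hp i hi
        · exact norm_sum_sq_le_card_mul_sum_norm_sq T (v i)
    _ = #T * ∑ τ ∈ T, ∑ i ∈ s, p i * ‖v i τ‖ ^ 2 := by
        simp only [sum_comm (s := T), mul_sum, mul_left_comm]

end NormSumSq

section WeightedVariance

variable {ι E : Type*} [SeminormedAddCommGroup E] [NormedSpace ℝ E] {s : Finset ι} {a : ι → ℝ}

lemma norm_sum_smul_sq_le (ha : ∀ i ∈ s, 0 ≤ a i) (hs : ∑ i ∈ s, a i = 1) (v : ι → E) :
    ‖∑ i ∈ s, a i • v i‖ ^ 2 ≤ ∑ i ∈ s, a i * ‖v i‖ ^ 2 :=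
  (convexOn_univ_norm.pow (fun _ _ => norm_nonneg _) 2).map_sum_le ha hs fun _ _ => Set.mem_univ _

/-- The variance of the vectors `v i`, `i ∈ s`, under the weights `a`, which are meant to be
nonnegative with sum `1` on `s`: the mean is `∑ j ∈ s, a j • v j`, without normalization. It
measures the spread of the gradients within a cluster. -/
def weightedVariance (s : Finset ι) (a : ι → ℝ) (v : ι → E) : ℝ :=
  ∑ i ∈ s, a i * ‖v i - ∑ j ∈ s, a j • v j‖ ^ 2

lemma weightedVariance_le_add_weightedVariance (ha : ∀ i ∈ s, 0 ≤ a i) (hs : ∑ i ∈ s, a i = 1)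
    (u v : ι → E) :
    weightedVariance s a u ≤
      6 * ∑ i ∈ s, a i * ‖u i - v i‖ ^ 2 + 3 * weightedVariance s a v := by
  set ubar := ∑ j ∈ s, a j • u j with hubar
  set vbar := ∑ j ∈ s, a j • v j with hvbar
  have mean_le : ‖vbar - ubar‖ ^ 2 ≤ ∑ i ∈ s, a i * ‖u i - v i‖ ^ 2 := by
    rw [norm_sub_rev, hubar, hvbar, ← sum_sub_distrib]
    simpa only [smul_sub] using norm_sum_smul_sq_le ha hs fun i => u i - v i
  calc weightedVariance s a u
      ≤ ∑ i ∈ s, a i * (3 * (‖u i - v i‖ ^ 2 + ‖v i - vbar‖ ^ 2 + ‖vbar - ubar‖ ^ 2)) := by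
        refine sum_le_sum fun i hi => mul_le_mul_of_nonneg_left ?_ (ha i hi)
        simpa only [sub_add_sub_cancel] using
          norm_add_add_sq_le (u i - v i) (v i - vbar) (vbar - ubar)
    _ = 3 * (∑ i ∈ s, a i * ‖u i - v i‖ ^ 2 + weightedVariance s a v + ‖vbar - ubar‖ ^ 2) := by
        simp only [mul_left_comm _ (3 : ℝ), ← mul_sum, mul_add, sum_add_distrib, ← sum_mul, hs,
          one_mul, weightedVariance, ← hvbar]
    _ ≤ 6 * ∑ i ∈ s, a i * ‖u i - v i‖ ^ 2 + 3 * weightedVariance s a v := by linarith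

lemma weightedVariance_lipschitz_le {X : Type*} [PseudoMetricSpace X] {L : NNReal} {G : ι → X → E}
    (ha : ∀ i ∈ s, 0 ≤ a i) (hs : ∑ i ∈ s, a i = 1) (hG : ∀ i ∈ s, LipschitzWith L (G i))
    (x : ι → X) (y : X) :
    weightedVariance s a (fun i => G i (x i)) ≤
      6 * L ^ 2 * ∑ i ∈ s, a i * dist (x i) y ^ 2 + 3 * weightedVariance s a (fun i => G i y) := by
  have perturbation_le : ∑ i ∈ s, a i * ‖G i (x i) - G i y‖ ^ 2 ≤
      L ^ 2 * ∑ i ∈ s, a i * dist (x i) y ^ 2 :=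
    calc ∑ i ∈ s, a i * ‖G i (x i) - G i y‖ ^ 2
        ≤ ∑ i ∈ s, a i * (L * dist (x i) y) ^ 2 := by
          gcongr with i hi
          · exact ha i hi
          · simpa only [dist_eq_norm] using (hG i hi).dist_le_mul (x i) y
      _ = L ^ 2 * ∑ i ∈ s, a i * dist (x i) y ^ 2 := by
          simp only [mul_pow, mul_sum, mul_left_comm]
  linarith [weightedVariance_le_add_weightedVariance ha hs (fun i => G i (x i)) fun i => G i y]

end WeightedVariance

section Clusters

variable {ι σ : Type*} [Fintype ι] [Fintype σ] [DecidableEq σ]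

lemma sum_mul_comp_mul_eq_sum_fiberwise {R : Type*} [CommSemiring R]
    (c : ι → σ) (a : ι → R) (b : σ → R) (X : ι → σ → R) :
    ∑ m, a m * b (c m) * X m (c m) = ∑ i, b i * ∑ m with c m = i, a m * X m i := by
  rw [← sum_fiberwise univ c]
  refine sum_congr rfl fun i _ => ?_
  rw [mul_sum]
  refine sum_congr rfl fun m hm => ?_
  obtain rfl : c m = i := (mem_filter.1 hm).2
  ring

lemma sum_mul_comp_mul_le_of_fiberwise_le {R : Type*} [CommSemiring R] [PartialOrder R]
    [IsOrderedRing R] {c : ι → σ} {a : ι → R} {b : σ → R}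
    (hb : ∀ i, 0 ≤ b i) (hb1 : ∑ i, b i = 1) {X Y : ι → σ → R} {A B : R}
    (h : ∀ i, ∑ m with c m = i, a m * X m i ≤ A * ∑ m with c m = i, a m * Y m i + B) :
    ∑ m, a m * b (c m) * X m (c m) ≤ A * ∑ m, a m * b (c m) * Y m (c m) + B := by
  rw [sum_mul_comp_mul_eq_sum_fiberwise c a b X, sum_mul_comp_mul_eq_sum_fiberwise c a b Y]
  calc ∑ i, b i * ∑ m with c m = i, a m * X m i
      ≤ ∑ i, b i * (A * ∑ m with c m = i, a m * Y m i + B) :=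
        sum_le_sum fun i _ => mul_le_mul_of_nonneg_left (h i) (hb i)
    _ = A * ∑ i, b i * ∑ m with c m = i, a m * Y m i + B := by
        simp only [mul_add, sum_add_distrib, ← sum_mul, hb1, one_mul, mul_left_comm _ A, ← mul_sum]

lemma sum_mul_norm_sub_clusterMean_sq_le {X E : Type*} [PseudoMetricSpace X]
    [SeminormedAddCommGroup E] [NormedSpace ℝ E]
    {c : ι → σ} {a : ι → ℝ} {b : σ → ℝ} {L : NNReal} {G : ι → X → E} {e : ℝ}
    (ha : ∀ m, 0 ≤ a m) (ha1 : ∀ i, ∑ m with c m = i, a m = 1)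
    (hb : ∀ i, 0 ≤ b i) (hb1 : ∑ i, b i = 1) (hG : ∀ m, LipschitzWith L (G m))
    (x : ι → X) (y : σ → X)
    (hvar : ∀ i, weightedVariance {m | c m = i} a (fun m => G m (y i)) ≤ e) :
    ∑ m, a m * b (c m) * ‖G m (x m) - ∑ j with c j = c m, a j • G j (x j)‖ ^ 2 ≤
      6 * L ^ 2 * ∑ m, a m * b (c m) * dist (x m) (y (c m)) ^ 2 + 3 * e := by
  refine sum_mul_comp_mul_le_of_fiberwise_le hb hb1
    (X := fun m i => ‖G m (x m) - ∑ j with c j = i, a j • G j (x j)‖ ^ 2)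
    (Y := fun m i => dist (x m) (y i) ^ 2) fun i => ?_
  calc weightedVariance {m | c m = i} a (fun m => G m (x m))
      ≤ 6 * L ^ 2 * ∑ m with c m = i, a m * dist (x m) (y i) ^ 2 +
          3 * weightedVariance {m | c m = i} a (fun m => G m (y i)) :=
        weightedVariance_lipschitz_le (fun m _ => ha m) (ha1 i) (fun m _ => hG m) x (y i)
    _ ≤ 6 * L ^ 2 * ∑ m with c m = i, a m * dist (x m) (y i) ^ 2 + 3 * e := by
        gcongr; exact hvar i

end Clusters

lemma gradient_sum_const_mul {ι E : Type*} [NormedAddCommGroup E] [InnerProductSpace ℝ E]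
    [CompleteSpace E] {s : Finset ι} {F : ι → E → ℝ} {x : E} (a : ι → ℝ)
    (hF : ∀ i ∈ s, DifferentiableAt ℝ (F i) x) :
    gradient (fun y => ∑ i ∈ s, a i * F i y) x = ∑ i ∈ s, a i • gradient (F i) x := by
  have hderiv : HasFDerivAt (fun y => ∑ i ∈ s, a i * F i y) (∑ i ∈ s, a i • fderiv ℝ (F i) x) x :=
    HasFDerivAt.fun_sum fun i hi => (hF i hi).hasFDerivAt.const_mul (a i)
  simp [gradient, hderiv.fderiv]

theorem local_gradient_drift_bound_general
    {ι σ θ E : Type*} [Fintype ι] [Fintype σ] [DecidableEq σ]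
    [NormedAddCommGroup E] [InnerProductSpace ℝ E] [CompleteSpace E]
    {c : ι → σ} {αc : ι → ℝ} {αC : σ → ℝ} {α : ι → ℝ}
    (hαc : ∀ m, 0 ≤ αc m) (hαcsum : ∀ i, ∑ m with c m = i, αc m = 1)
    (hαC : ∀ i, 0 ≤ αC i) (hαCsum : ∑ i, αC i = 1) (hα : ∀ m, α m = αc m * αC (c m))
    {F : ι → E → ℝ} {fc : σ → E → ℝ} (hFdiff : ∀ m, Differentiable ℝ (F m))
    (hfc : ∀ i x, fc i x = ∑ m with c m = i, αc m * F m x)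
    {L : NNReal} {εc : ℝ} (hLip : ∀ m, LipschitzWith L (gradient (F m)))
    (hdivc : ∀ i x, ∑ m with c m = i, αc m * ‖gradient (F m) x - gradient (fc i) x‖ ^ 2 ≤ εc ^ 2)
    (T : Finset θ) (w : ι → θ → E) (z : σ → θ → E) :
    ∑ m, α m * ‖∑ τ ∈ T, (gradient (F m) (w m τ) -
        ∑ j with c j = c m, αc j • gradient (F j) (w j τ))‖ ^ 2 ≤
      6 * L ^ 2 * #T * ∑ m, ∑ τ ∈ T, α m * ‖w m τ - z (c m) τ‖ ^ 2 + 3 * (#T : ℝ) ^ 2 * εc ^ 2 := by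
  obtain rfl : α = fun m => αc m * αC (c m) := funext hα
  have variance_le (i : σ) (x : E) :
      weightedVariance {m | c m = i} αc (fun m => gradient (F m) x) ≤ εc ^ 2 := by
    have hgrad : gradient (fc i) x = ∑ m with c m = i, αc m • gradient (F m) x := by
      rw [funext (hfc i), gradient_sum_const_mul αc fun m _ => hFdiff m x]
    simpa only [weightedVariance, hgrad] using hdivc i x
  calc _ ≤ #T * ∑ τ ∈ T, ∑ m, αc m * αC (c m) * ‖gradient (F m) (w m τ) -
          ∑ j with c j = c m, αc j • gradient (F j) (w j τ)‖ ^ 2 :=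
        sum_mul_norm_sum_sq_le univ T (fun m _ => mul_nonneg (hαc m) (hαC (c m))) _
    _ ≤ #T * ∑ τ ∈ T, (6 * L ^ 2 * ∑ m, αc m * αC (c m) * ‖w m τ - z (c m) τ‖ ^ 2 +
          3 * εc ^ 2) := by
        gcongr with τ
        simpa only [dist_eq_norm] using sum_mul_norm_sub_clusterMean_sq_le hαc hαcsum hαC hαCsum
          hLip (fun m => w m τ) (fun i => z i τ) fun i => variance_le i (z i τ)
    _ = _ := by
        rw [sum_add_distrib, ← mul_sum, sum_comm, sum_const, nsmul_eq_mul]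
        ring

/-- Accumulated deviation of local gradients from their cluster averages
over `κ` steps is controlled by `6 L² κ` times the accumulated squared distances to the
cluster anchors plus `3 κ² ε_c²`. -/
theorem local_gradient_drift_bound
    {d M N : ℕ} (c : Fin M → Fin N)
    (αc : Fin M → ℝ) (αC : Fin N → ℝ) (α : Fin M → ℝ)
    (hαc01 : ∀ m, αc m ∈ Set.Icc (0 : ℝ) 1)
    (hαcsum : ∀ i, ∑ m ∈ univ.filter (fun m => c m = i), αc m = 1)
    (hαC01 : ∀ i, αC i ∈ Set.Icc (0 : ℝ) 1)
    (hαCsum : ∑ i, αC i = 1)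
    (hα : ∀ m, α m = αc m * αC (c m))
    (F : Fin M → EuclideanSpace ℝ (Fin d) → ℝ)
    (fc : Fin N → EuclideanSpace ℝ (Fin d) → ℝ)
    (hFdiff : ∀ m, Differentiable ℝ (F m))
    (hfc : ∀ i x, fc i x = ∑ m ∈ univ.filter (fun m => c m = i), αc m * F m x)
    (L εc : ℝ) (hL : 0 < L)
    (hLip : ∀ m, LipschitzWith L.toNNReal (gradient (F m)))
    (hdivc : ∀ i x, ∑ m ∈ univ.filter (fun m => c m = i),
        αc m * ‖gradient (F m) x - gradient (fc i) x‖ ^ 2 ≤ εc ^ 2)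
    (κ : ℕ) (hκ : 1 ≤ κ)
    (w : Fin M → ℕ → EuclideanSpace ℝ (Fin d))
    (z : Fin N → ℕ → EuclideanSpace ℝ (Fin d)) :
    ∑ m, α m * ‖∑ τ ∈ range κ, (gradient (F m) (w m τ) -
        ∑ j ∈ univ.filter (fun j => c j = c m), αc j • gradient (F j) (w j τ))‖ ^ 2 ≤
      6 * L ^ 2 * κ * ∑ m, ∑ τ ∈ range κ, α m * ‖w m τ - z (c m) τ‖ ^ 2 +
        3 * (κ : ℝ) ^ 2 * εc ^ 2 := by
  simpa only [card_range, Real.coe_toNNReal L hL.le] using local_gradient_drift_bound_general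
    (fun m => (hαc01 m).1) hαcsum (fun i => (hαC01 i).1) hαCsum hα hFdiff hfc hLip hdivc (range κ)
    w z
end

section
/- Under the MACFL setup (full participation, weights β), if the learning rate satisfies η < 1/(√12 · L · κ₁), then the time-averaged weighted mean-square deviation between local models and their averaged cluster models is bounded as (1/T)·Σ_{t=0}^{T−1} Σ_{m=1}^{M} β_m E‖w_m^t − w̄_{c(m)}^t‖² ≤ (2 η² κ₁/(1 − 12 η² L² κ₁²)) · ( 3 κ₁ ε_{M,c}² + σ_M² Σ_{m=1}^{M} β_m (1 − β^c_m) ). -/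
open MeasureTheory ProbabilityTheory Finset

/-!
Subtracting the cluster update from the local update, the deviation `X j = w j - wc` of user `j`
from its cluster mean evolves between synchronizations by `X j - η • (g j - ∑ k, p k • g k)`.
Conditional unbiasedness makes the centered noise orthogonal to the centered drift, so the two
contribute separately to the mean square:

* the weighted mean minimizes the mean-square distance, so centering the drift at its own mean
  costs no more than centering it at the cluster gradient, which is at most
  `2 * L ^ 2` times the deviation plus `2 * ε ^ 2`;
* the variance of the noise over a cluster is half its weighted sum of pairwise square distances,
  whose diagonal vanishes; this gives `2 * σ ^ 2 * ∑ j, p j * (1 - p j)` however the noises of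
  different users are correlated.

Splitting off the drift `s` steps after a synchronization by Young's inequality with parameter
`1 / (K + s)` inflates the deviation by at most `(K + K) / K = 2` over a period of length `K`.
Summing over a period bounds the total deviation by a multiple of itself, which is absorbed
because the learning rate is small.
-/

section ScalarRecursion

lemma le_mul_sum_add_of_forall_young_step {A G : ℕ → ℝ} {a V : ℝ} {n : ℕ} (ha : 0 < a)
    (hV : 0 ≤ V) (h0 : A 0 = 0)
    (hstep : ∀ s < n, ∀ α > 0, A (s + 1) ≤ (1 + α) * A s + (1 + α⁻¹) * G s + V) :
    ∀ s ≤ n, A s ≤ (a + s) * (∑ r ∈ range s, G r + s * (V / a)) := by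
  intro s
  induction s with
  | zero => simp [h0]
  | succ s ih =>
    intro hs
    have hpos : 0 < a + s := by positivity
    -- With this choice of `α` the factors `1 + α` telescope to `(a + s) / a`.
    have hyoung := hstep s hs (a + s)⁻¹ (inv_pos.mpr hpos)
    have hV' : V ≤ (a + s + 1) * (V / a) := by
      rw [mul_div_assoc', le_div_iff₀ ha]
      nlinarith [mul_nonneg hV s.cast_nonneg]
    calc A (s + 1)
        ≤ (1 + (a + s)⁻¹) * A s + (1 + (a + s)) * G s + V := by simpa using hyoung
      _ ≤ (1 + (a + s)⁻¹) * ((a + s) * (∑ r ∈ range s, G r + s * (V / a)))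
            + (1 + (a + s)) * G s + (a + s + 1) * (V / a) := by
          gcongr
          exact ih (by lia)
      _ = (a + (s + 1 : ℕ)) * (∑ r ∈ range (s + 1), G r + (s + 1 : ℕ) * (V / a)) := by
          rw [sum_range_succ]
          push_cast
          field_simp
          ring

lemma le_two_mul_sum_add_of_forall_young_step {A G : ℕ → ℝ} {V : ℝ} {K n : ℕ} (hV : 0 ≤ V)
    (hG : ∀ s, 0 ≤ G s) (h0 : A 0 = 0)
    (hstep : ∀ s, s + 1 < n → ∀ α > 0, A (s + 1) ≤ (1 + α) * A s + (1 + α⁻¹) * G s + V)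
    (hn : n ≤ K) {s : ℕ} (hs : s < n) :
    A s ≤ 2 * K * ∑ r ∈ range n, G r + 2 * V * s := by
  have hK : (0 : ℝ) < K := mod_cast (Nat.zero_le s).trans_lt (hs.trans_le hn)
  have hsK : (s : ℝ) ≤ K := mod_cast hs.le.trans hn
  have hsum_nonneg : 0 ≤ ∑ r ∈ range n, G r := sum_nonneg fun r _ ↦ hG r
  calc A s ≤ (K + s) * (∑ r ∈ range s, G r + s * (V / K)) :=
        le_mul_sum_add_of_forall_young_step (n := n - 1) hK hV h0
          (fun r hr ↦ hstep r (by lia)) s (by lia)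
    _ ≤ (K + s) * (∑ r ∈ range n, G r + s * (V / K)) := by
        gcongr
        exact fun r _ _ ↦ hG r
    _ ≤ (K + K) * (∑ r ∈ range n, G r + s * (V / K)) := by gcongr
    _ = 2 * K * ∑ r ∈ range n, G r + 2 * V * s := by field_simp; ring

lemma sum_range_cast_mul_two_le (n : ℕ) : (∑ s ∈ range n, (s : ℝ)) * 2 ≤ n ^ 2 := by
  have : (∑ s ∈ range n, s) * 2 ≤ n ^ 2 := by
    rw [sum_range_id_mul_two, sq]
    gcongr
    exact n.sub_le 1
  rw [← Nat.cast_sum]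
  exact_mod_cast this

lemma one_sub_mul_sum_range_le_of_forall_young_step {A : ℕ → ℝ} {a b V : ℝ} {K n : ℕ}
    (ha : 0 ≤ a) (hb : 0 ≤ b) (hV : 0 ≤ V) (hA : ∀ s, 0 ≤ A s) (h0 : A 0 = 0)
    (hstep : ∀ s, s + 1 < n → ∀ α > 0,
      A (s + 1) ≤ (1 + α) * A s + (1 + α⁻¹) * (a * A s + b) + V)
    (hn : n ≤ K) :
    (1 - 2 * a * K ^ 2) * ∑ s ∈ range n, A s ≤ n * (K * (2 * K * b + V)) := by
  have hn' : (n : ℝ) ≤ K := mod_cast hn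
  set S := ∑ s ∈ range n, A s
  have hS : 0 ≤ S := sum_nonneg fun s _ ↦ hA s
  have hforcing : ∑ s ∈ range n, (a * A s + b) = a * S + n * b := by
    simp [sum_add_distrib, ← mul_sum, S]
  have hforcing_nonneg : ∀ s, 0 ≤ a * A s + b := fun s ↦
    add_nonneg (mul_nonneg ha (hA s)) hb
  have hterm : ∀ s ∈ range n, A s ≤ 2 * K * (a * S + n * b) + 2 * V * s := fun s hs ↦ by
    simpa only [hforcing] using
      le_two_mul_sum_add_of_forall_young_step hV hforcing_nonneg h0 hstep hn (mem_range.mp hs)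
  have hS_le : S ≤ 2 * n * K * (a * S + n * b) + n ^ 2 * V :=
    calc S ≤ ∑ s ∈ range n, (2 * K * (a * S + n * b) + 2 * V * s) := sum_le_sum hterm
      _ = 2 * n * K * (a * S + n * b) + (∑ s ∈ range n, (s : ℝ)) * 2 * V := by
          rw [sum_add_distrib, ← mul_sum _ _ (2 * V), sum_const, card_range, nsmul_eq_mul]
          ring
      _ ≤ 2 * n * K * (a * S + n * b) + n ^ 2 * V := by
          gcongr
          exact sum_range_cast_mul_two_le n
  have hn_le_K : 2 * n * K * (a * S + n * b) + n ^ 2 * V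
      ≤ 2 * K * K * (a * S) + 2 * n * K * (K * b) + n * K * V := by
    rw [mul_add, sq]
    gcongr
  linarith

lemma sum_range_le_of_forall_sum_block_le {A : ℕ → ℝ} {b : ℝ} {K : ℕ} (hK : 0 < K)
    (hblock : ∀ q, ∀ n ≤ K, ∑ s ∈ range n, A (K * q + s) ≤ n * b) (T : ℕ) :
    ∑ t ∈ range T, A t ≤ T * b := by
  have hfull : ∀ q : ℕ, ∑ t ∈ range (K * q), A t ≤ (K * q : ℕ) * b := fun q ↦ by
    induction q with
    | zero => simp
    | succ q ih =>
      rw [Nat.mul_succ, sum_range_add, Nat.cast_add, add_mul]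
      exact add_le_add ih (hblock q K le_rfl)
  rw [← Nat.div_add_mod T K, sum_range_add, Nat.cast_add, add_mul]
  exact add_le_add (hfull _) (hblock _ _ (Nat.mod_lt T hK).le)

lemma one_sub_mul_sum_range_le_of_periodic_reset {A : ℕ → ℝ} {a b V : ℝ} {K : ℕ} (hK : 0 < K)
    (ha : 0 ≤ a) (hb : 0 ≤ b) (hV : 0 ≤ V) (hA : ∀ t, 0 ≤ A t)
    (hreset : ∀ t, K ∣ t → A t = 0)
    (hstep : ∀ t, ¬ K ∣ t + 1 → ∀ α > 0,
      A (t + 1) ≤ (1 + α) * A t + (1 + α⁻¹) * (a * A t + b) + V) (T : ℕ) :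
    (1 - 2 * a * K ^ 2) * ∑ t ∈ range T, A t ≤ T * (K * (2 * K * b + V)) := by
  rw [mul_sum]
  refine sum_range_le_of_forall_sum_block_le hK (fun q n hn ↦ ?_) T
  rw [← mul_sum]
  refine one_sub_mul_sum_range_le_of_forall_young_step ha hb hV (fun s ↦ hA (K * q + s))
    (hreset _ (dvd_mul_right K q)) (fun s hs ↦ hstep (K * q + s) ?_) hn
  rw [add_assoc, Nat.dvd_add_right (dvd_mul_right K q)]
  exact Nat.not_dvd_of_pos_of_lt s.succ_pos (hs.trans_le hn)

end ScalarRecursion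

section ClusterWeights

variable {ι κ : Type*} [Fintype κ] {q : κ → ℝ}

lemma mul_sum_mul_le_affine_of_forall_le {x y : κ → ℝ} {a b v r : ℝ} (hq0 : ∀ i, 0 ≤ q i)
    (hq : ∑ i, q i = 1) (hle : ∀ i, a * x i ≤ r * (b + v * y i)) :
    a * ∑ i, q i * x i ≤ r * (b + v * ∑ i, q i * y i) :=
  calc a * ∑ i, q i * x i = ∑ i, q i * (a * x i) := by
        simp_rw [mul_sum, mul_left_comm]
    _ ≤ ∑ i, q i * (r * (b + v * y i)) :=
        sum_le_sum fun i _ ↦ mul_le_mul_of_nonneg_left (hle i) (hq0 i)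
    _ = r * ((∑ i, q i) * b + v * ∑ i, q i * y i) := by
        simp_rw [sum_mul, mul_sum, ← sum_add_distrib, mul_sum]
        exact sum_congr rfl fun i _ ↦ by ring
    _ = r * (b + v * ∑ i, q i * y i) := by rw [hq, one_mul]

lemma sum_mul_eq_sum_mul_sum_filter [Fintype ι] [DecidableEq κ] {c : ι → κ} {β p : ι → ℝ}
    (hβ : ∀ m, β m = p m * q (c m)) (f : ι → ℝ) :
    ∑ m, β m * f m = ∑ i, q i * ∑ m with c m = i, p m * f m := by
  rw [← sum_fiberwise univ c]
  refine sum_congr rfl fun i _ ↦ ?_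
  rw [mul_sum]
  refine sum_congr rfl fun m hm ↦ ?_
  rw [hβ m, (mem_filter.mp hm).2]
  ring

end ClusterWeights

section WeightedMean

variable {ι E F : Type*}

/-- The aggregate `∑ j ∈ s, p j • x j` of a family over a cluster `s`. The weights are not
normalized, so this is a mean only when they sum to `1`; contrast `Finset.centerMass`. It is
also applied to families of random vectors, hence the general module. -/
def weightedMean {V : Type*} [AddCommGroup V] [Module ℝ V] (s : Finset ι) (p : ι → ℝ)
    (x : ι → V) : V :=
  ∑ j ∈ s, p j • x j

lemma weightedMean_sub {V : Type*} [AddCommGroup V] [Module ℝ V] (s : Finset ι) (p : ι → ℝ)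
    (x y : ι → V) : weightedMean s p (x - y) = weightedMean s p x - weightedMean s p y := by
  simp [weightedMean, smul_sub]

lemma weightedMean_apply {Ω V : Type*} [AddCommGroup V] [Module ℝ V] (s : Finset ι) (p : ι → ℝ)
    (X : ι → Ω → V) (ω : Ω) : weightedMean s p X ω = weightedMean s p (X · ω) := by
  simp [weightedMean]

lemma norm_add_sq_le_young [SeminormedAddCommGroup E] (x y : E) {α : ℝ} (hα : 0 < α) :
    ‖x + y‖ ^ 2 ≤ (1 + α) * ‖x‖ ^ 2 + (1 + α⁻¹) * ‖y‖ ^ 2 :=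
  calc ‖x + y‖ ^ 2 ≤ (‖x‖ + ‖y‖) ^ 2 := by gcongr; exact norm_add_le x y
    _ = ‖x‖ ^ 2 + 2 * ‖x‖ * ‖y‖ + ‖y‖ ^ 2 := add_sq _ _
    _ ≤ ‖x‖ ^ 2 + (α * ‖x‖ ^ 2 + α⁻¹ * ‖y‖ ^ 2) + ‖y‖ ^ 2 := by
        gcongr
        exact two_mul_le_add_mul_sq hα
    _ = (1 + α) * ‖x‖ ^ 2 + (1 + α⁻¹) * ‖y‖ ^ 2 := by ring

lemma norm_sub_sq_le_young [SeminormedAddCommGroup E] (x y : E) {α : ℝ} (hα : 0 < α) :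
    ‖x - y‖ ^ 2 ≤ (1 + α) * ‖x‖ ^ 2 + (1 + α⁻¹) * ‖y‖ ^ 2 := by
  simpa [sub_eq_add_neg] using norm_add_sq_le_young x (-y) hα

variable [NormedAddCommGroup E] [InnerProductSpace ℝ E] {s : Finset ι} {p : ι → ℝ}

lemma sum_mul_norm_sub_sq (hp : ∑ j ∈ s, p j = 1) (x : ι → E) (z : E) :
    ∑ j ∈ s, p j * ‖x j - z‖ ^ 2 =
      ∑ j ∈ s, p j * ‖x j - weightedMean s p x‖ ^ 2 + ‖weightedMean s p x - z‖ ^ 2 := by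
  set b := weightedMean s p x
  have hexpand : ∀ j, p j * ‖x j - z‖ ^ 2 = p j * ‖x j - b‖ ^ 2 +
      2 * inner ℝ (p j • (x j - b)) (b - z) + p j * ‖b - z‖ ^ 2 := fun j ↦ by
    rw [← sub_add_sub_cancel (x j) b z, norm_add_sq_real, real_inner_smul_left]
    ring
  have hcentered : ∑ j ∈ s, p j • (x j - b) = 0 := by
    simp_rw [smul_sub, sum_sub_distrib, ← sum_smul, hp, one_smul]
    exact sub_self b
  simp_rw [hexpand, sum_add_distrib, ← mul_sum, ← sum_inner, hcentered, ← sum_mul, hp]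
  simp

lemma sum_mul_norm_sub_weightedMean_sq_le (hp : ∑ j ∈ s, p j = 1) (x : ι → E) (z : E) :
    ∑ j ∈ s, p j * ‖x j - weightedMean s p x‖ ^ 2 ≤ ∑ j ∈ s, p j * ‖x j - z‖ ^ 2 := by
  rw [sum_mul_norm_sub_sq hp x z]
  exact le_add_of_nonneg_right (sq_nonneg _)

lemma sum_sum_mul_norm_sub_sq (hp : ∑ j ∈ s, p j = 1) (x : ι → E) :
    ∑ k ∈ s, p k * ∑ j ∈ s, p j * ‖x j - x k‖ ^ 2 =
      2 * ∑ j ∈ s, p j * ‖x j - weightedMean s p x‖ ^ 2 := by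
  simp_rw [sum_mul_norm_sub_sq hp x (x _), mul_add, sum_add_distrib, ← sum_mul, hp,
    norm_sub_rev (weightedMean s p x)]
  ring

lemma sum_mul_norm_sub_weightedMean_sq_le_sum_mul_one_sub (hp0 : ∀ j ∈ s, 0 ≤ p j)
    (hp : ∑ j ∈ s, p j = 1) (x : ι → E) :
    ∑ j ∈ s, p j * ‖x j - weightedMean s p x‖ ^ 2 ≤
      2 * ∑ j ∈ s, p j * (1 - p j) * ‖x j‖ ^ 2 := by
  classical
  -- The diagonal terms vanish on the left, which is what saves the factor `1 - p j`.
  have hpair : ∀ k ∈ s, ∀ j ∈ s, p k * (p j * ‖x j - x k‖ ^ 2) ≤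
      2 * (p k * (p j * ‖x j‖ ^ 2)) + 2 * (p j * (p k * ‖x k‖ ^ 2)) -
        if k = j then 4 * (p j * (p j * ‖x j‖ ^ 2)) else 0 := fun k hk j hj ↦ by
    split_ifs with hkj
    · subst hkj
      simp only [sub_self, norm_zero]
      linarith
    · have hyoung : ‖x j - x k‖ ^ 2 ≤ 2 * ‖x j‖ ^ 2 + 2 * ‖x k‖ ^ 2 := by
        simpa [one_add_one_eq_two] using norm_sub_sq_le_young (x j) (x k) one_pos
      linarith [mul_le_mul_of_nonneg_left hyoung (mul_nonneg (hp0 k hk) (hp0 j hj))]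
  have hsum := sum_le_sum fun k hk ↦ sum_le_sum (hpair k hk)
  simp_rw [← mul_sum, sum_sum_mul_norm_sub_sq hp, sum_sub_distrib, sum_add_distrib, ← mul_sum,
    ← sum_mul, hp, one_mul, sum_ite_eq, sum_ite_mem, inter_self, ← mul_sum] at hsum
  have hsplit : ∑ j ∈ s, p j * (1 - p j) * ‖x j‖ ^ 2 =
      ∑ j ∈ s, p j * ‖x j‖ ^ 2 - ∑ j ∈ s, p j * (p j * ‖x j‖ ^ 2) := by
    rw [← sum_sub_distrib]
    exact sum_congr rfl fun j _ ↦ by ring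
  linarith

lemma sum_mul_norm_sub_weightedMean_sq_le_of_lipschitzWith [SeminormedAddCommGroup F]
    {h : ι → F → E} {L : NNReal} (hp0 : ∀ j ∈ s, 0 ≤ p j) (hp : ∑ j ∈ s, p j = 1)
    (hLip : ∀ j ∈ s, LipschitzWith L (h j)) (x : ι → F) (y : F) (z : E) :
    ∑ j ∈ s, p j * ‖h j (x j) - weightedMean s p (fun k ↦ h k (x k))‖ ^ 2 ≤
      2 * L ^ 2 * ∑ j ∈ s, p j * ‖x j - y‖ ^ 2 + 2 * ∑ j ∈ s, p j * ‖h j y - z‖ ^ 2 := by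
  have hj : ∀ j ∈ s, ‖h j (x j) - z‖ ^ 2 ≤ 2 * (L * ‖x j - y‖) ^ 2 + 2 * ‖h j y - z‖ ^ 2 :=
    fun j hj ↦
    calc ‖h j (x j) - z‖ ^ 2 = ‖(h j (x j) - h j y) + (h j y - z)‖ ^ 2 := by
          rw [sub_add_sub_cancel]
      _ ≤ 2 * ‖h j (x j) - h j y‖ ^ 2 + 2 * ‖h j y - z‖ ^ 2 := by
          simpa [one_add_one_eq_two] using
            norm_add_sq_le_young (h j (x j) - h j y) (h j y - z) one_pos
      _ ≤ 2 * (L * ‖x j - y‖) ^ 2 + 2 * ‖h j y - z‖ ^ 2 := by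
          gcongr
          exact (hLip j hj).norm_sub_le _ _
  calc ∑ j ∈ s, p j * ‖h j (x j) - weightedMean s p (fun k ↦ h k (x k))‖ ^ 2
      ≤ ∑ j ∈ s, p j * ‖h j (x j) - z‖ ^ 2 := sum_mul_norm_sub_weightedMean_sq_le hp _ z
    _ ≤ ∑ j ∈ s, p j * (2 * (L * ‖x j - y‖) ^ 2 + 2 * ‖h j y - z‖ ^ 2) :=
        sum_le_sum fun j hjs ↦ mul_le_mul_of_nonneg_left (hj j hjs) (hp0 j hjs)
    _ = _ := by
        simp_rw [mul_sum, ← sum_add_distrib]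
        exact sum_congr rfl fun j _ ↦ by ring

end WeightedMean

section MeanSquare

variable {ι Ω E : Type*} {m m0 : MeasurableSpace Ω} {μ : Measure Ω} [NormedAddCommGroup E]

lemma memLp_comp_of_lipschitzWith {F : Type*} [NormedAddCommGroup F] [IsFiniteMeasure μ]
    {f : E → F} {L : NNReal} {p : ENNReal} (hf : LipschitzWith L f) {X : Ω → E}
    (hX : MemLp X p μ) : MemLp (fun ω ↦ f (X ω)) p μ := by
  have hcentered : MemLp ((fun x ↦ f x - f 0) ∘ X) p μ :=
    LipschitzWith.comp_memLp (by simpa using hf.sub (LipschitzWith.const (f 0))) (sub_self _) hX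
  simpa [Function.comp_def, Pi.add_def] using hcentered.add (memLp_const (f 0))

section NormedSpace

variable [NormedSpace ℝ E]

lemma memLp_weightedMean {s : Finset ι} {p : ι → ℝ} {X : ι → Ω → E} {q : ENNReal}
    (hX : ∀ j ∈ s, MemLp (X j) q μ) : MemLp (weightedMean s p X) q μ :=
  memLp_finsetSum' s fun j hj ↦ (hX j hj).const_smul (p j)

lemma stronglyMeasurable_weightedMean {s : Finset ι} {p : ι → ℝ} {X : ι → Ω → E}
    (hX : ∀ j ∈ s, StronglyMeasurable[m] (X j)) : StronglyMeasurable[m] (weightedMean s p X) :=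
  Finset.stronglyMeasurable_sum s fun j hj ↦ (hX j hj).const_smul (p j)

variable [CompleteSpace E]

lemma condExp_weightedMean {s : Finset ι} {p : ι → ℝ} {X Y : ι → Ω → E}
    (hX : ∀ j ∈ s, Integrable (X j) μ) (hXY : ∀ j ∈ s, μ[X j | m] =ᵐ[μ] Y j) :
    μ[weightedMean s p X | m] =ᵐ[μ] weightedMean s p Y := by
  have hsmul : ∀ᵐ ω ∂μ, ∀ j ∈ s, μ[p j • X j | m] ω = p j • Y j ω := by
    rw [Filter.eventually_all_finset]
    intro j hj
    filter_upwards [condExp_smul (p j) (X j) m, hXY j hj] with ω hcond hY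
    rw [hcond, Pi.smul_apply, hY]
  filter_upwards [condExp_finsetSum (fun j hj ↦ (hX j hj).smul (p j)) m, hsmul] with ω hsum hω
  rw [weightedMean, hsum, Finset.sum_apply, weightedMean_apply]
  exact sum_congr rfl hω

lemma condExp_sub_weightedMean {s : Finset ι} {p : ι → ℝ} {X Y : ι → Ω → E}
    (hX : ∀ j ∈ s, Integrable (X j) μ) (hXY : ∀ j ∈ s, μ[X j | m] =ᵐ[μ] Y j) {j : ι}
    (hj : j ∈ s) : μ[X j - weightedMean s p X | m] =ᵐ[μ] Y j - weightedMean s p Y :=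
  (condExp_sub (hX j hj) (integrable_finsetSum' s fun k hk ↦ (hX k hk).smul (p k)) m).trans <|
    (hXY j hj).sub (condExp_weightedMean hX hXY)

lemma condExp_sub_ae_eq_zero (hm : m ≤ m0) [SigmaFinite (μ.trim hm)] {Y Z : Ω → E}
    (hY : Integrable Y μ) (hZ : Integrable Z μ) (hZm : StronglyMeasurable[m] Z)
    (hYZ : μ[Y | m] =ᵐ[μ] Z) :
    μ[Y - Z | m] =ᵐ[μ] 0 := by
  filter_upwards [condExp_sub hY hZ m, hYZ] with ω hsub hω
  rw [hsub, Pi.sub_apply, hω, condExp_of_stronglyMeasurable hm hZm hZ, sub_self, Pi.zero_apply]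

end NormedSpace

variable [InnerProductSpace ℝ E]

lemma integrable_inner_of_memLp_two {X Y : Ω → E} (hX : MemLp X 2 μ) (hY : MemLp Y 2 μ) :
    Integrable (fun ω ↦ inner ℝ (X ω) (Y ω)) μ :=
  (hX.norm.integrable_mul hY.norm).mono (hX.1.inner hY.1) <| .of_forall fun ω ↦ by
    simpa using abs_real_inner_le_norm (X ω) (Y ω)

variable [CompleteSpace E] [IsFiniteMeasure μ]

lemma integral_inner_eq_zero_of_condExp_eq_zero (hm : m ≤ m0) {X Y : Ω → E}
    (hXm : StronglyMeasurable[m] X) (hX : MemLp X 2 μ) (hY : MemLp Y 2 μ)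
    (hY0 : μ[Y | m] =ᵐ[μ] 0) : ∫ ω, inner ℝ (X ω) (Y ω) ∂μ = 0 := by
  have hpull : μ[fun ω ↦ inner ℝ (X ω) (Y ω) | m] =ᵐ[μ] fun ω ↦ inner ℝ (X ω) (μ[Y | m] ω) :=
    condExp_bilin_of_stronglyMeasurable_left (innerSL ℝ) hXm
      (integrable_inner_of_memLp_two hX hY) (hY.integrable one_le_two)
  rw [← integral_condExp hm]
  refine integral_eq_zero_of_ae ?_
  filter_upwards [hpull, hY0] with ω hω hω0
  rw [hω, hω0, Pi.zero_apply, inner_zero_right, Pi.zero_apply]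

lemma integral_norm_sub_smul_sq_of_condExp_eq_zero (hm : m ≤ m0) {X Y : Ω → E}
    (hXm : StronglyMeasurable[m] X) (hX : MemLp X 2 μ) (hY : MemLp Y 2 μ)
    (hY0 : μ[Y | m] =ᵐ[μ] 0) (η : ℝ) :
    ∫ ω, ‖X ω - η • Y ω‖ ^ 2 ∂μ = ∫ ω, ‖X ω‖ ^ 2 ∂μ + η ^ 2 * ∫ ω, ‖Y ω‖ ^ 2 ∂μ := by
  have hexpand : ∀ ω, ‖X ω - η • Y ω‖ ^ 2 =
      ‖X ω‖ ^ 2 - 2 * η * inner ℝ (X ω) (Y ω) + η ^ 2 * ‖Y ω‖ ^ 2 := fun ω ↦ by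
    rw [norm_sub_sq_real, real_inner_smul_right, norm_smul, mul_pow, Real.norm_eq_abs, sq_abs]
    ring
  have hX2 := hX.integrable_norm_pow two_ne_zero
  have hXY := (integrable_inner_of_memLp_two hX hY).const_mul (2 * η)
  have hY2 := (hY.integrable_norm_pow two_ne_zero).const_mul (η ^ 2)
  have hX2XY : Integrable (fun ω ↦ ‖X ω‖ ^ 2 - 2 * η * inner ℝ (X ω) (Y ω)) μ := hX2.sub hXY
  simp_rw [hexpand]
  rw [integral_add hX2XY hY2, integral_sub hX2 hXY, integral_const_mul,
    integral_const_mul, integral_inner_eq_zero_of_condExp_eq_zero hm hXm hX hY hY0,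
    mul_zero, sub_zero]

lemma integral_norm_sub_smul_sq_le (hm : m ≤ m0) {X Y Z : Ω → E}
    (hXm : StronglyMeasurable[m] X) (hZm : StronglyMeasurable[m] Z) (hX : MemLp X 2 μ)
    (hY : MemLp Y 2 μ) (hZ : MemLp Z 2 μ) (hYZ : μ[Y | m] =ᵐ[μ] Z) (η : ℝ) {α : ℝ}
    (hα : 0 < α) :
    ∫ ω, ‖X ω - η • Y ω‖ ^ 2 ∂μ ≤
      (1 + α) * ∫ ω, ‖X ω‖ ^ 2 ∂μ + (1 + α⁻¹) * (η ^ 2 * ∫ ω, ‖Z ω‖ ^ 2 ∂μ) +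
        η ^ 2 * ∫ ω, ‖Y ω - Z ω‖ ^ 2 ∂μ := by
  have hnoise : μ[Y - Z | m] =ᵐ[μ] 0 :=
    condExp_sub_ae_eq_zero hm (hY.integrable one_le_two) (hZ.integrable one_le_two) hZm hYZ
  have hdrift : ∫ ω, ‖X ω - η • Z ω‖ ^ 2 ∂μ ≤
      (1 + α) * ∫ ω, ‖X ω‖ ^ 2 ∂μ + (1 + α⁻¹) * (η ^ 2 * ∫ ω, ‖Z ω‖ ^ 2 ∂μ) := by
    have hX2 := (hX.integrable_norm_pow two_ne_zero).const_mul (1 + α)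
    have hZ2 := ((hZ.integrable_norm_pow two_ne_zero).const_mul (η ^ 2)).const_mul (1 + α⁻¹)
    simp_rw [← integral_const_mul]
    rw [← integral_add hX2 hZ2]
    refine integral_mono ((hX.sub (hZ.const_smul η)).integrable_norm_pow two_ne_zero)
      (hX2.add hZ2) fun ω ↦ ?_
    simpa [norm_smul, mul_pow] using norm_sub_sq_le_young (X ω) (η • Z ω) hα
  calc ∫ ω, ‖X ω - η • Y ω‖ ^ 2 ∂μ
      = ∫ ω, ‖(X - η • Z) ω - η • (Y - Z) ω‖ ^ 2 ∂μ := by simp [smul_sub]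
    _ = ∫ ω, ‖X ω - η • Z ω‖ ^ 2 ∂μ + η ^ 2 * ∫ ω, ‖Y ω - Z ω‖ ^ 2 ∂μ :=
        integral_norm_sub_smul_sq_of_condExp_eq_zero hm (hXm.sub (hZm.const_smul η))
          (hX.sub (hZ.const_smul η)) (hY.sub hZ) hnoise η
    _ ≤ _ := by gcongr

end MeanSquare

section Cluster

variable {ι Ω E : Type*} {m m0 : MeasurableSpace Ω} {μ : Measure Ω} [NormedAddCommGroup E]
  {s : Finset ι} {p : ι → ℝ}

/-- The weighted mean square `∑ j ∈ s, p j * E‖X j‖²` of a family of random vectors over a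
cluster `s`; the deviation of a cluster is the case `X j = w_j - w̄`. -/
noncomputable def meanSq (μ : Measure Ω) (s : Finset ι) (p : ι → ℝ) (X : ι → Ω → E) : ℝ :=
  ∑ j ∈ s, p j * ∫ ω, ‖X j ω‖ ^ 2 ∂μ

lemma meanSq_nonneg (hp0 : ∀ j ∈ s, 0 ≤ p j) (X : ι → Ω → E) : 0 ≤ meanSq μ s p X :=
  sum_nonneg fun j hj ↦ mul_nonneg (hp0 j hj) (integral_nonneg fun _ ↦ sq_nonneg _)

lemma meanSq_eq_integral {X : ι → Ω → E} (hX : ∀ j ∈ s, MemLp (X j) 2 μ) :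
    meanSq μ s p X = ∫ ω, ∑ j ∈ s, p j * ‖X j ω‖ ^ 2 ∂μ := by
  rw [integral_finsetSum s fun j hj ↦ ((hX j hj).integrable_norm_pow two_ne_zero).const_mul _]
  simp_rw [integral_const_mul, meanSq]

lemma integrable_sum_mul_norm_sq {X : ι → Ω → E} (hX : ∀ j ∈ s, MemLp (X j) 2 μ) :
    Integrable (fun ω ↦ ∑ j ∈ s, p j * ‖X j ω‖ ^ 2) μ :=
  integrable_finsetSum s fun j hj ↦ ((hX j hj).integrable_norm_pow two_ne_zero).const_mul _

lemma sum_mul_integral_eq_sum_mul_meanSq {κ : Type*} [Fintype ι] [Fintype κ] [DecidableEq κ]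
    {c : ι → κ} {β : ι → ℝ} {q : κ → ℝ} (hβ : ∀ m, β m = p m * q (c m)) (x : ι → Ω → E)
    (y : κ → Ω → E) :
    ∑ m, β m * ∫ ω, ‖x m ω - y (c m) ω‖ ^ 2 ∂μ =
      ∑ i, q i * meanSq μ {m | c m = i} p (fun m ↦ x m - y i) := by
  rw [sum_mul_eq_sum_mul_sum_filter hβ]
  refine sum_congr rfl fun i _ ↦ congrArg (q i * ·) (sum_congr rfl fun m hm ↦ ?_)
  rw [(mem_filter.mp hm).2]
  rfl

variable [InnerProductSpace ℝ E]

lemma meanSq_sub_weightedMean_le {V : ι → Ω → E} {v : ℝ} (hp0 : ∀ j ∈ s, 0 ≤ p j)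
    (hp : ∑ j ∈ s, p j = 1) (hV : ∀ j ∈ s, MemLp (V j) 2 μ)
    (hv : ∀ j ∈ s, ∫ ω, ‖V j ω‖ ^ 2 ∂μ ≤ v) :
    meanSq μ s p (fun j ↦ V j - weightedMean s p V) ≤ 2 * (v * ∑ j ∈ s, p j * (1 - p j)) := by
  have hcentered : ∀ j ∈ s, MemLp (V j - weightedMean s p V) 2 μ :=
    fun j hj ↦ (hV j hj).sub (memLp_weightedMean hV)
  calc meanSq μ s p (fun j ↦ V j - weightedMean s p V)
      = ∫ ω, ∑ j ∈ s, p j * ‖V j ω - weightedMean s p (V · ω)‖ ^ 2 ∂μ := by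
        simp_rw [meanSq_eq_integral hcentered, Pi.sub_apply, weightedMean_apply]
    _ ≤ ∫ ω, 2 * ∑ j ∈ s, p j * (1 - p j) * ‖V j ω‖ ^ 2 ∂μ := by
        refine integral_mono ?_ ((integrable_sum_mul_norm_sq hV).const_mul 2)
          fun ω ↦ sum_mul_norm_sub_weightedMean_sq_le_sum_mul_one_sub hp0 hp (V · ω)
        simpa [weightedMean_apply] using integrable_sum_mul_norm_sq (p := p) hcentered
    _ = 2 * ∑ j ∈ s, p j * (1 - p j) * ∫ ω, ‖V j ω‖ ^ 2 ∂μ := by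
        rw [integral_const_mul, ← meanSq_eq_integral hV, meanSq]
    _ ≤ 2 * ∑ j ∈ s, p j * (1 - p j) * v := by
        gcongr with j hj
        · exact mul_nonneg (hp0 j hj) (sub_nonneg.mpr (hp ▸ single_le_sum hp0 hj))
        · exact hv j hj
    _ = 2 * (v * ∑ j ∈ s, p j * (1 - p j)) := by rw [← sum_mul, mul_comm v]

variable {h : ι → E → E} {hc : E → E} {L : NNReal} {ε σ : ℝ} {x g : ι → Ω → E} {y : Ω → E}

lemma meanSq_comp_sub_weightedMean_le [IsProbabilityMeasure μ] (hp0 : ∀ j ∈ s, 0 ≤ p j)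
    (hp : ∑ j ∈ s, p j = 1) (hLip : ∀ j ∈ s, LipschitzWith L (h j))
    (hdiv : ∀ u, ∑ j ∈ s, p j * ‖h j u - hc u‖ ^ 2 ≤ ε ^ 2)
    (hx : ∀ j ∈ s, MemLp (x j) 2 μ) (hy : MemLp y 2 μ) :
    meanSq μ s p (fun j ↦ h j ∘ x j - weightedMean s p fun k ↦ h k ∘ x k) ≤
      2 * L ^ 2 * meanSq μ s p (fun j ↦ x j - y) + 2 * ε ^ 2 := by
  have hhx : ∀ j ∈ s, MemLp (h j ∘ x j) 2 μ :=
    fun j hj ↦ memLp_comp_of_lipschitzWith (hLip j hj) (hx j hj)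
  have hcentered : ∀ j ∈ s, MemLp (h j ∘ x j - weightedMean s p fun k ↦ h k ∘ x k) 2 μ :=
    fun j hj ↦ (hhx j hj).sub (memLp_weightedMean hhx)
  have hdev : ∀ j ∈ s, MemLp (x j - y) 2 μ := fun j hj ↦ (hx j hj).sub hy
  have hdevInt := (integrable_sum_mul_norm_sq (p := p) hdev).const_mul (2 * (L : ℝ) ^ 2)
  rw [meanSq_eq_integral hcentered, meanSq_eq_integral hdev, ← integral_const_mul]
  calc _ ≤ ∫ ω, (2 * L ^ 2 * ∑ j ∈ s, p j * ‖(x j - y) ω‖ ^ 2 + 2 * ε ^ 2) ∂μ := by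
        refine integral_mono (integrable_sum_mul_norm_sq hcentered)
          (hdevInt.add (integrable_const _)) fun ω ↦ ?_
        have hpoint := sum_mul_norm_sub_weightedMean_sq_le_of_lipschitzWith hp0 hp hLip
          (x · ω) (y ω) (hc (y ω))
        simp only [Pi.sub_apply, weightedMean_apply, Function.comp_apply]
        linarith [hdiv (y ω)]
    _ = _ := by rw [integral_add hdevInt (integrable_const _)]; simp

variable [CompleteSpace E]

lemma meanSq_sub_smul_le [IsFiniteMeasure μ] (hm : m ≤ m0) {X Y Z : ι → Ω → E}
    (hp0 : ∀ j ∈ s, 0 ≤ p j)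
    (hXm : ∀ j ∈ s, StronglyMeasurable[m] (X j)) (hZm : ∀ j ∈ s, StronglyMeasurable[m] (Z j))
    (hX : ∀ j ∈ s, MemLp (X j) 2 μ) (hY : ∀ j ∈ s, MemLp (Y j) 2 μ)
    (hZ : ∀ j ∈ s, MemLp (Z j) 2 μ) (hYZ : ∀ j ∈ s, μ[Y j | m] =ᵐ[μ] Z j) (η : ℝ) {α : ℝ}
    (hα : 0 < α) :
    meanSq μ s p (fun j ↦ X j - η • Y j) ≤
      (1 + α) * meanSq μ s p X + (1 + α⁻¹) * (η ^ 2 * meanSq μ s p Z) +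
        η ^ 2 * meanSq μ s p (fun j ↦ Y j - Z j) := by
  simp_rw [meanSq, mul_sum, ← sum_add_distrib]
  refine sum_le_sum fun j hj ↦ (mul_le_mul_of_nonneg_left (integral_norm_sub_smul_sq_le hm
    (hXm j hj) (hZm j hj) (hX j hj) (hY j hj) (hZ j hj) (hYZ j hj) η hα) (hp0 j hj)).trans_eq ?_
  simp only [Pi.sub_apply]
  ring

lemma meanSq_deviation_step_le [IsProbabilityMeasure μ] (hm : m ≤ m0)
    (hp0 : ∀ j ∈ s, 0 ≤ p j) (hp : ∑ j ∈ s, p j = 1) (hLip : ∀ j ∈ s, LipschitzWith L (h j))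
    (hdiv : ∀ u, ∑ j ∈ s, p j * ‖h j u - hc u‖ ^ 2 ≤ ε ^ 2)
    (hxm : ∀ j ∈ s, StronglyMeasurable[m] (x j)) (hym : StronglyMeasurable[m] y)
    (hx : ∀ j ∈ s, MemLp (x j) 2 μ) (hy : MemLp y 2 μ) (hg : ∀ j ∈ s, MemLp (g j) 2 μ)
    (hmean : ∀ j ∈ s, μ[g j | m] =ᵐ[μ] h j ∘ x j)
    (hvar : ∀ j ∈ s, ∫ ω, ‖g j ω - h j (x j ω)‖ ^ 2 ∂μ ≤ σ ^ 2) (η : ℝ) {α : ℝ} (hα : 0 < α) :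
    meanSq μ s p (fun j ↦ (x j - η • g j) - (y - η • weightedMean s p g)) ≤
      (1 + α) * meanSq μ s p (fun j ↦ x j - y) +
        (1 + α⁻¹) * (2 * η ^ 2 * L ^ 2 * meanSq μ s p (fun j ↦ x j - y) + 2 * η ^ 2 * ε ^ 2) +
        2 * η ^ 2 * (σ ^ 2 * ∑ j ∈ s, p j * (1 - p j)) := by
  set b : ι → Ω → E := fun j ↦ h j ∘ x j
  have hbm : ∀ j ∈ s, StronglyMeasurable[m] (b j) :=
    fun j hj ↦ (hLip j hj).continuous.comp_stronglyMeasurable (hxm j hj)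
  have hb : ∀ j ∈ s, MemLp (b j) 2 μ :=
    fun j hj ↦ memLp_comp_of_lipschitzWith (hLip j hj) (hx j hj)
  calc meanSq μ s p (fun j ↦ (x j - η • g j) - (y - η • weightedMean s p g))
      = meanSq μ s p (fun j ↦ (x j - y) - η • (g j - weightedMean s p g)) := by
        congr 1 with j
        rw [sub_sub_sub_comm, smul_sub]
    _ ≤ (1 + α) * meanSq μ s p (fun j ↦ x j - y) +
          (1 + α⁻¹) * (η ^ 2 * meanSq μ s p (fun j ↦ b j - weightedMean s p b)) +
          η ^ 2 * meanSq μ s p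
            (fun j ↦ (g j - weightedMean s p g) - (b j - weightedMean s p b)) :=
        meanSq_sub_smul_le hm hp0 (fun j hj ↦ (hxm j hj).sub hym)
          (fun j hj ↦ (hbm j hj).sub (stronglyMeasurable_weightedMean hbm))
          (fun j hj ↦ (hx j hj).sub hy) (fun j hj ↦ (hg j hj).sub (memLp_weightedMean hg))
          (fun j hj ↦ (hb j hj).sub (memLp_weightedMean hb))
          (fun _ ↦ condExp_sub_weightedMean (fun k hk ↦ (hg k hk).integrable one_le_two) hmean)
          η hα
    _ = (1 + α) * meanSq μ s p (fun j ↦ x j - y) +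
          (1 + α⁻¹) * (η ^ 2 * meanSq μ s p (fun j ↦ b j - weightedMean s p b)) +
          η ^ 2 * meanSq μ s p (fun j ↦ (g - b) j - weightedMean s p (g - b)) := by
        simp_rw [weightedMean_sub, Pi.sub_apply, sub_sub_sub_comm]
    _ ≤ (1 + α) * meanSq μ s p (fun j ↦ x j - y) +
          (1 + α⁻¹) * (η ^ 2 * (2 * L ^ 2 * meanSq μ s p (fun j ↦ x j - y) + 2 * ε ^ 2)) +
          η ^ 2 * (2 * (σ ^ 2 * ∑ j ∈ s, p j * (1 - p j))) := by
        gcongr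
        · exact meanSq_comp_sub_weightedMean_le hp0 hp hLip hdiv hx hy
        · exact meanSq_sub_weightedMean_le hp0 hp (fun j hj ↦ (hg j hj).sub (hb j hj)) hvar
    _ = _ := by ring

end Cluster

section FederatedAveraging

variable {ι κ Ω E : Type*} {m0 : MeasurableSpace Ω} {μ : Measure Ω} [IsProbabilityMeasure μ]
  [NormedAddCommGroup E] [InnerProductSpace ℝ E] [CompleteSpace E] {L : NNReal} {ε σ η : ℝ}
  {K : ℕ} {𝓕 : Filtration ℕ m0} {h : ι → E → E} {w g : ι → ℕ → Ω → E}

lemma one_sub_mul_sum_range_meanSq_deviation_le {s : Finset ι} {p : ι → ℝ} {hc : E → E}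
    {wc : ℕ → Ω → E} (hK : 0 < K) (hp0 : ∀ j ∈ s, 0 ≤ p j) (hp : ∑ j ∈ s, p j = 1)
    (hLip : ∀ j ∈ s, LipschitzWith L (h j))
    (hdiv : ∀ u, ∑ j ∈ s, p j * ‖h j u - hc u‖ ^ 2 ≤ ε ^ 2)
    (hw_adapted : ∀ j ∈ s, StronglyAdapted 𝓕 (w j)) (hwc_adapted : StronglyAdapted 𝓕 wc)
    (hw_sq : ∀ j ∈ s, ∀ t, MemLp (w j t) 2 μ) (hwc_sq : ∀ t, MemLp (wc t) 2 μ)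
    (hg_sq : ∀ j ∈ s, ∀ t, MemLp (g j t) 2 μ)
    (hg_mean : ∀ j ∈ s, ∀ t, μ[g j t | 𝓕 t] =ᵐ[μ] h j ∘ w j t)
    (hg_var : ∀ j ∈ s, ∀ t, ∫ ω, ‖g j t ω - h j (w j t ω)‖ ^ 2 ∂μ ≤ σ ^ 2)
    (hreset : ∀ j ∈ s, ∀ t, K ∣ t → w j t = wc t)
    (hstep_w : ∀ j ∈ s, ∀ t, ¬ K ∣ t + 1 → w j (t + 1) = w j t - η • g j t)
    (hstep_wc : ∀ t, wc (t + 1) = wc t - η • weightedMean s p (g · t)) (T : ℕ) :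
    (1 - 4 * η ^ 2 * L ^ 2 * K ^ 2) *
        ∑ t ∈ range T, meanSq μ s p (fun j ↦ w j t - wc t) ≤
      T * (2 * η ^ 2 * K) * (2 * K * ε ^ 2 + σ ^ 2 * ∑ j ∈ s, p j * (1 - p j)) := by
  have hvar_nonneg : 0 ≤ ∑ j ∈ s, p j * (1 - p j) := sum_nonneg fun j hj ↦
    mul_nonneg (hp0 j hj) (sub_nonneg.mpr (hp ▸ single_le_sum hp0 hj))
  have hreset_dev : ∀ t, K ∣ t → meanSq μ s p (fun j ↦ w j t - wc t) = 0 := fun t ht ↦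
    sum_eq_zero fun j hj ↦ by simp [hreset j hj t ht]
  have hstep_dev : ∀ t, ¬ K ∣ t + 1 → ∀ α > 0,
      meanSq μ s p (fun j ↦ w j (t + 1) - wc (t + 1)) ≤
        (1 + α) * meanSq μ s p (fun j ↦ w j t - wc t) +
          (1 + α⁻¹) * (2 * η ^ 2 * L ^ 2 * meanSq μ s p (fun j ↦ w j t - wc t) +
            2 * η ^ 2 * ε ^ 2) +
          2 * η ^ 2 * (σ ^ 2 * ∑ j ∈ s, p j * (1 - p j)) := fun t ht α hα ↦ by
    refine Eq.trans_le (sum_congr rfl fun j hj ↦ ?_) <|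
      meanSq_deviation_step_le (𝓕.le t) hp0 hp hLip hdiv (fun j hj ↦ hw_adapted j hj t)
        (hwc_adapted t) (fun j hj ↦ hw_sq j hj t) (hwc_sq t) (fun j hj ↦ hg_sq j hj t)
        (fun j hj ↦ hg_mean j hj t) (fun j hj ↦ hg_var j hj t) η hα
    simp only [hstep_w j hj t ht, hstep_wc t]
  have htotal := one_sub_mul_sum_range_le_of_periodic_reset hK (by positivity) (by positivity)
    (by positivity) (fun t ↦ meanSq_nonneg hp0 fun j ↦ w j t - wc t) hreset_dev hstep_dev T
  convert htotal using 1 <;> ring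

variable [Fintype ι] [Fintype κ] [DecidableEq κ] {c : ι → κ} {βc β : ι → ℝ} {βC : κ → ℝ}
  {hc : κ → E → E} {wc : κ → ℕ → Ω → E}

/-- `h m` and `hc i` play the roles of `∇F̃_m` and `∇f̃_{c_i}`. -/
theorem macfl_local_deviation_general {T : ℕ} (hβc0 : ∀ m, 0 ≤ βc m)
    (hβcsum : ∀ i, ∑ m with c m = i, βc m = 1) (hβC0 : ∀ i, 0 ≤ βC i) (hβCsum : ∑ i, βC i = 1)
    (hβ : ∀ m, β m = βc m * βC (c m)) (hK : 0 < K) (hT : 0 < T)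
    (hηK : 4 * η ^ 2 * L ^ 2 * K ^ 2 < 1) (hLip : ∀ m, LipschitzWith L (h m))
    (hdivc : ∀ i u, ∑ m with c m = i, βc m * ‖h m u - hc i u‖ ^ 2 ≤ ε ^ 2)
    (hw_adapted : ∀ m, StronglyAdapted 𝓕 (w m)) (hwc_adapted : ∀ i, StronglyAdapted 𝓕 (wc i))
    (hg_sq : ∀ m t, MemLp (g m t) 2 μ) (hw_sq : ∀ m t, MemLp (w m t) 2 μ)
    (hwc_sq : ∀ i t, MemLp (wc i t) 2 μ)
    (hg_mean : ∀ m t, μ[g m t | 𝓕 t] =ᵐ[μ] fun ω ↦ h m (w m t ω))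
    (hg_var : ∀ m t, ∫ ω, ‖g m t ω - h m (w m t ω)‖ ^ 2 ∂μ ≤ σ ^ 2)
    (hreset_w : ∀ m t, K ∣ t → w m t = wc (c m) t)
    (hstep_w : ∀ m t, ¬ K ∣ t + 1 → ∀ ω, w m (t + 1) ω = w m t ω - η • g m t ω)
    (hstep_wc : ∀ i t ω, wc i (t + 1) ω = wc i t ω - η • ∑ m with c m = i, βc m • g m t ω) :
    (1 / (T : ℝ)) * ∑ t ∈ range T, ∑ m, β m * ∫ ω, ‖w m t ω - wc (c m) t ω‖ ^ 2 ∂μ ≤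
      (2 * η ^ 2 * K / (1 - 4 * η ^ 2 * L ^ 2 * K ^ 2)) *
        (2 * K * ε ^ 2 + σ ^ 2 * ∑ m, β m * (1 - βc m)) := by
  have hcluster (i : κ) := one_sub_mul_sum_range_meanSq_deviation_le hK (fun m _ ↦ hβc0 m)
    (hβcsum i) (fun m _ ↦ hLip m) (hdivc i) (fun m _ ↦ hw_adapted m) (hwc_adapted i)
    (fun m _ ↦ hw_sq m) (hwc_sq i) (fun m _ ↦ hg_sq m) (fun m _ ↦ hg_mean m)
    (fun m _ ↦ hg_var m)
    (fun m hm t ht ↦ (mem_filter.mp hm).2 ▸ hreset_w m t ht)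
    (fun m _ t ht ↦ funext (hstep_w m t ht))
    (fun t ↦ funext fun ω ↦ by
      rw [hstep_wc i t ω, Pi.sub_apply, Pi.smul_apply, weightedMean_apply, weightedMean]) T
  have hdeviation (t : ℕ) :=
    sum_mul_integral_eq_sum_mul_meanSq (μ := μ) hβ (w · t) (wc · t)
  rw [one_div_mul_eq_div, div_le_iff₀ (by positivity), div_mul_eq_mul_div, div_mul_eq_mul_div,
    le_div_iff₀ (by linarith)]
  simp_rw [hdeviation, sum_mul_eq_sum_mul_sum_filter hβ]
  rw [sum_comm]
  simp_rw [← mul_sum]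
  linarith [mul_sum_mul_le_affine_of_forall_le hβC0 hβCsum hcluster]

end FederatedAveraging

lemma mul_sq_mul_sq_lt_one_of_lt_one_div_sqrt_mul {a η y : ℝ} (ha : 0 ≤ a) (hη : 0 ≤ η)
    (h : η < 1 / (√a * y)) : a * η ^ 2 * y ^ 2 < 1 := by
  have hpos : 0 < √a * y := one_div_pos.mp (hη.trans_lt h)
  have hlt : η * (√a * y) < 1 := (lt_div_iff₀ hpos).mp h
  calc a * η ^ 2 * y ^ 2 = (η * (√a * y)) ^ 2 := by rw [mul_pow, mul_pow, Real.sq_sqrt ha]; ring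
    _ < 1 := pow_lt_one₀ (by positivity) hlt two_ne_zero

/-- Under the MACFL setup (full participation, weights `β`), for a
learning rate `η < 1/(√12 L κ₁)`, the time-averaged weighted mean-square deviation between
local models and their averaged cluster models is bounded as stated. -/
theorem macfl_local_deviation
    {d : ℕ} {Ω : Type*} [m0 : MeasurableSpace Ω] {μ : Measure Ω} [IsProbabilityMeasure μ]
    {M N : ℕ} (c : Fin M → Fin N)
    (βc : Fin M → ℝ) (βC : Fin N → ℝ) (β : Fin M → ℝ)
    (hβc01 : ∀ m, βc m ∈ Set.Icc (0 : ℝ) 1)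
    (hβcsum : ∀ i, ∑ m ∈ univ.filter (fun m => c m = i), βc m = 1)
    (hβC01 : ∀ i, βC i ∈ Set.Icc (0 : ℝ) 1)
    (hβCsum : ∑ i, βC i = 1)
    (hβ : ∀ m, β m = βc m * βC (c m))
    -- personalized losses
    (Ft : Fin M → EuclideanSpace ℝ (Fin d) → ℝ)
    (fct : Fin N → EuclideanSpace ℝ (Fin d) → ℝ)
    (ft : EuclideanSpace ℝ (Fin d) → ℝ)
    (hFdiff : ∀ m, Differentiable ℝ (Ft m))
    (hfct : ∀ i x, fct i x = ∑ m ∈ univ.filter (fun m => c m = i), βc m * Ft m x)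
    (hft : ∀ x, ft x = ∑ i, βC i * fct i x)
    -- constants
    (L σM εMc η : ℝ) (κ₁ T : ℕ)
    (hκ₁ : 0 < κ₁) (hT : 0 < T)
    (hL : 0 < L) (hη : 0 < η)
    (hηκ : η < 1 / (Real.sqrt 12 * L * κ₁))
    -- assumptions
    (hLip : ∀ m, LipschitzWith L.toNNReal (gradient (Ft m)))
    (hdivc : ∀ i x, ∑ m ∈ univ.filter (fun m => c m = i),
        βc m * ‖gradient (Ft m) x - gradient (fct i) x‖ ^ 2 ≤ εMc ^ 2)
    -- stochastic processes (full participation)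
    (w : Fin M → ℕ → Ω → EuclideanSpace ℝ (Fin d))
    (wc : Fin N → ℕ → Ω → EuclideanSpace ℝ (Fin d))
    (g : Fin M → ℕ → Ω → EuclideanSpace ℝ (Fin d))
    (𝓕 : Filtration ℕ m0)
    (hw_adapted : ∀ m, StronglyAdapted 𝓕 (w m))
    (hwc_adapted : ∀ i, StronglyAdapted 𝓕 (wc i))
    (hg_meas : ∀ m t, Measurable (g m t))
    (hg_sq : ∀ m t, MemLp (g m t) 2 μ)
    (hw_sq : ∀ m t, MemLp (w m t) 2 μ)
    (hwc_sq : ∀ i t, MemLp (wc i t) 2 μ)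
    -- conditionally unbiased stochastic gradients with bounded variance
    (hg_mean : ∀ m t, μ[g m t | 𝓕 t] =ᵐ[μ] fun ω => gradient (Ft m) (w m t ω))
    (hg_var : ∀ m t, ∫ ω, ‖g m t ω - gradient (Ft m) (w m t ω)‖ ^ 2 ∂μ ≤ σM ^ 2)
    -- update rules (all users participate in every aggregation)
    (hreset_w : ∀ m t, κ₁ ∣ t → w m t = wc (c m) t)
    (hstep_w : ∀ m t, ¬ κ₁ ∣ (t + 1) →
        ∀ ω, w m (t + 1) ω = w m t ω - η • g m t ω)
    (hstep_wc : ∀ i t, ∀ ω, wc i (t + 1) ω =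
        wc i t ω - η • ∑ m ∈ univ.filter (fun m => c m = i), βc m • g m t ω) :
    (1 / (T : ℝ)) * ∑ t ∈ Finset.range T,
        ∑ m, β m * ∫ ω, ‖w m t ω - wc (c m) t ω‖ ^ 2 ∂μ ≤
      (2 * η ^ 2 * κ₁ / (1 - 12 * η ^ 2 * L ^ 2 * (κ₁ : ℝ) ^ 2)) *
        (3 * (κ₁ : ℝ) * εMc ^ 2 + σM ^ 2 * ∑ m, β m * (1 - βc m)) := by
  lift L to NNReal using hL.le
  rw [Real.toNNReal_coe] at hLip
  have hsmall : 12 * η ^ 2 * L ^ 2 * (κ₁ : ℝ) ^ 2 < 1 := by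
    rw [mul_assoc] at hηκ
    simpa [mul_pow, mul_assoc] using
      mul_sq_mul_sq_lt_one_of_lt_one_div_sqrt_mul (by norm_num) hη.le hηκ
  have hsmall' : 4 * η ^ 2 * L ^ 2 * (κ₁ : ℝ) ^ 2 ≤ 12 * η ^ 2 * L ^ 2 * (κ₁ : ℝ) ^ 2 := by
    gcongr
    norm_num
  have hvar_nonneg : 0 ≤ ∑ m, β m * (1 - βc m) := sum_nonneg fun m _ ↦ by
    rw [hβ]
    exact mul_nonneg (mul_nonneg (hβc01 m).1 (hβC01 _).1) (sub_nonneg.mpr (hβc01 m).2)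
  refine (macfl_local_deviation_general (fun m ↦ (hβc01 m).1) hβcsum (fun i ↦ (hβC01 i).1)
    hβCsum hβ hκ₁ hT (hsmall'.trans_lt hsmall) hLip hdivc hw_adapted hwc_adapted hg_sq hw_sq
    hwc_sq hg_mean hg_var hreset_w hstep_w hstep_wc).trans ?_
  gcongr
  linarith
end
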